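/- For every fixed real y with 1 ≤ y < 2, the sequence f(n) = (2^{2n}/(2^{2n} − 1)) · (1 − (y/2)^n)² is (weakly) increasing in n for n ≥ 1; equivalently, each of the three factors 1 − (y/2)^n, 1 − 1/(2^n + 1), and 1 − (y^n − 1)/(2^n − 1) is positive and increasing in n for n ≥ 1, and f(n) is their product. -/

import Mathlib

/-!
Writing `a = y ^ n` and `b = 2 ^ n`, the factorization of `f(n)` follows from
`b² - 1 = (b - 1)(b + 1)` and `1 - (a - 1)/(b - 1) = (b - a)/(b - 1)`. Since the factors are
positive and increasing, so is their product. Only the third factor needs an argument: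
cross-multiplying, `(y ^ (n+1) - 1)/(2 ^ (n+1) - 1) ≤ (y ^ n - 1)/(2 ^ n - 1)` becomes the
polynomial inequality `two_pow_le`, which is proved by induction on `n`.
-/

/-- For `1 ≤ n`, after cross-multiplication this says that the quotient
`(y ^ n - 1) / (2 ^ n - 1)` does not increase from `n` to `n + 1`. In the induction step the
gap between the two sides exceeds twice the previous gap by `(y - 1) (2 - y) y ^ n (2 * 2 ^ n - 1) ≥ 0`. -/
lemma two_pow_le (y : ℝ) (hy1 : 1 ≤ y) (hy2 : y < 2) (n : ℕ) :
    (2 : ℝ) ^ n ≤ (2 - y) * (y ^ n * 2 ^ n) + (y - 1) * y ^ n := by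
  induction n with
  | zero => norm_num
  | succ n ih =>
    have ha : 0 < y ^ n := by positivity
    have hb : (1 : ℝ) ≤ 2 ^ n := one_le_pow₀ (by norm_num)
    have h : 0 ≤ (y - 1) * (2 - y) * y ^ n * (2 * 2 ^ n - 1) :=
      mul_nonneg (mul_nonneg (mul_nonneg (by linarith) (by linarith)) ha.le) (by linarith)
    rw [pow_succ, pow_succ]
    linarith

lemma first_factor (y : ℝ) (hy1 : 1 ≤ y) (hy2 : y < 2) (n : ℕ) (hn : 1 ≤ n) :
    0 < 1 - (y / 2) ^ n ∧ 1 - (y / 2) ^ n ≤ 1 - (y / 2) ^ (n + 1) := by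
  have h0 : 0 ≤ y / 2 := by linarith
  have h1 : y / 2 < 1 := by linarith
  have h2 := pow_lt_one₀ h0 h1 (show n ≠ 0 by omega)
  have h3 := pow_le_pow_of_le_one h0 h1.le (Nat.le_succ n)
  exact ⟨by linarith, sub_le_sub_left h3 1⟩

lemma second_factor (n : ℕ) :
    0 < 1 - 1 / ((2 : ℝ) ^ n + 1) ∧
      1 - 1 / ((2 : ℝ) ^ n + 1) ≤ 1 - 1 / ((2 : ℝ) ^ (n + 1) + 1) := by
  have hb : (0 : ℝ) < 2 ^ n := by positivity
  constructor
  · rw [sub_pos, div_lt_one (by linarith)]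
    linarith
  · refine sub_le_sub_left (one_div_le_one_div_of_le (by linarith) ?_) 1
    rw [pow_succ]
    linarith

lemma third_factor (y : ℝ) (hy1 : 1 ≤ y) (hy2 : y < 2) (n : ℕ) (hn : 1 ≤ n) :
    0 < 1 - (y ^ n - 1) / ((2 : ℝ) ^ n - 1) ∧
      1 - (y ^ n - 1) / ((2 : ℝ) ^ n - 1) ≤
        1 - (y ^ (n + 1) - 1) / ((2 : ℝ) ^ (n + 1) - 1) := by
  have hb : (1 : ℝ) < 2 ^ n := one_lt_pow₀ (by norm_num) (by omega)
  have hab : y ^ n < 2 ^ n := pow_lt_pow_left₀ hy2 (by linarith) (by omega)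
  have key := two_pow_le y hy1 hy2 n
  constructor
  · rw [sub_pos, div_lt_one (by linarith)]
    linarith
  · refine sub_le_sub_left ?_ 1
    rw [pow_succ, pow_succ, div_le_div_iff₀ (by linarith) (by linarith)]
    linarith

lemma pmepr_factorization (y : ℝ) (n : ℕ) (hn : 1 ≤ n) :
    ((2 : ℝ) ^ (2 * n) / ((2 : ℝ) ^ (2 * n) - 1)) * (1 - (y / 2) ^ n) ^ 2 =
      (1 - (y / 2) ^ n) * (1 - 1 / ((2 : ℝ) ^ n + 1)) *
        (1 - (y ^ n - 1) / ((2 : ℝ) ^ n - 1)) := by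
  have hb : (1 : ℝ) < 2 ^ n := one_lt_pow₀ (by norm_num) (by omega)
  rw [div_pow, mul_comm 2 n, pow_mul]
  generalize (2 : ℝ) ^ n = b at *
  have h0 : b ≠ 0 := by linarith
  have h1 : b - 1 ≠ 0 := by linarith
  have h2 : b + 1 ≠ 0 := by linarith
  have h3 : b ^ 2 - 1 = (b - 1) * (b + 1) := by ring
  rw [h3]
  field_simp
  ring

/-- For `1 ≤ y < 2`, the sequence `f(n) = (2^{2n}/(2^{2n}-1))·(1-(y/2)^n)²` is weakly
increasing in `n` for `n ≥ 1`; moreover each of the three factors `1-(y/2)^n`,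
`1-1/(2^n+1)` and `1-(y^n-1)/(2^n-1)` is positive and increasing in `n` for `n ≥ 1`,
and `f(n)` is their product. -/
theorem pmepr_factor_monotone (y : ℝ) (hy1 : 1 ≤ y) (hy2 : y < 2) :
    (∀ n : ℕ, 1 ≤ n →
      ((2 : ℝ) ^ (2 * n) / ((2 : ℝ) ^ (2 * n) - 1)) * (1 - (y / 2) ^ n) ^ 2 ≤
        ((2 : ℝ) ^ (2 * (n + 1)) / ((2 : ℝ) ^ (2 * (n + 1)) - 1)) *
          (1 - (y / 2) ^ (n + 1)) ^ 2) ∧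
    (∀ n : ℕ, 1 ≤ n →
      (0 < 1 - (y / 2) ^ n ∧ 1 - (y / 2) ^ n ≤ 1 - (y / 2) ^ (n + 1)) ∧
      (0 < 1 - 1 / ((2 : ℝ) ^ n + 1) ∧
        1 - 1 / ((2 : ℝ) ^ n + 1) ≤ 1 - 1 / ((2 : ℝ) ^ (n + 1) + 1)) ∧
      (0 < 1 - (y ^ n - 1) / ((2 : ℝ) ^ n - 1) ∧
        1 - (y ^ n - 1) / ((2 : ℝ) ^ n - 1) ≤
          1 - (y ^ (n + 1) - 1) / ((2 : ℝ) ^ (n + 1) - 1))) ∧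
    (∀ n : ℕ, 1 ≤ n →
      ((2 : ℝ) ^ (2 * n) / ((2 : ℝ) ^ (2 * n) - 1)) * (1 - (y / 2) ^ n) ^ 2 =
        (1 - (y / 2) ^ n) * (1 - 1 / ((2 : ℝ) ^ n + 1)) *
          (1 - (y ^ n - 1) / ((2 : ℝ) ^ n - 1))) := by
  refine ⟨fun n hn => ?_, fun n hn => ⟨first_factor y hy1 hy2 n hn, second_factor n,
    third_factor y hy1 hy2 n hn⟩, fun n hn => pmepr_factorization y n hn⟩
  rw [pmepr_factorization y n hn, pmepr_factorization y (n + 1) (by omega)]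
  obtain ⟨p1, m1⟩ := first_factor y hy1 hy2 n hn
  obtain ⟨p2, m2⟩ := second_factor n
  obtain ⟨p3, m3⟩ := third_factor y hy1 hy2 n hn
  exact mul_le_mul (mul_le_mul m1 m2 p2.le (p1.le.trans m1)) m3 p3.le
    (mul_nonneg (p1.le.trans m1) (p2.le.trans m2))
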